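/- arXiv:2007.15725 — 2 statements merged into one kernel-verified Lean document; each statement's English description precedes it below -/
import Mathlib

section
/- Let β ∈ R^m and γ ∈ R be such that the inequality β·δ ≤ γ (with all z-coefficients zero) is valid for X^{l,u} and defines a facet of conv(X^{l,u}). Then there exists c > 0 such that either the inequality is c·(δ_{i+1} − δ_i) ≤ 0 for some i ∈ {1,…,m−1}, or the inequality is c·(−δ_m) ≤ 0. -/
open Finset

noncomputable section

def Xset (n m l u : ℕ) (S : Fin m → Finset (Fin n)) : Set ((Fin n → ℝ) × (Fin m → ℝ)) :=
  {zd | (∀ j, zd.1 j = 0 ∨ zd.1 j = 1) ∧ (∀ i, zd.2 i = 0 ∨ zd.2 i = 1) ∧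
        (∀ i, zd.2 i = ∏ j ∈ S i, (1 - zd.1 j)) ∧
        (l : ℝ) ≤ ∑ j, zd.1 j ∧ ∑ j, zd.1 j ≤ (u : ℝ)}

def Dset (n m l u : ℕ) (S : Fin m → Finset (Fin n)) : Set (Fin m → ℝ) :=
  Prod.snd '' Xset n m l u S

def Xfiber (n m l u : ℕ) (S : Fin m → Finset (Fin n)) (δ : Fin m → ℝ) :
    Set (Fin n → ℝ) :=
  {z | (z, δ) ∈ Xset n m l u S}

/-- The family is closed under nonempty intersection. -/
def ClosedInter (n m : ℕ) (S : Fin m → Finset (Fin n)) : Prop :=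
  ∀ i j : Fin m, (S i ∩ S j).Nonempty → ∃ k, S i ∩ S j = S k

/-- The family is proper. -/
def ProperFam (n m l u : ℕ) (S : Fin m → Finset (Fin n)) : Prop :=
  ClosedInter n m S ∧
  ∃ D : Finset (Fin m → ℝ), (D : Set (Fin m → ℝ)) = Dset n m l u S ∧ D.card = m + 1 ∧
    AffineIndependent ℝ (Subtype.val : {x : Fin m → ℝ // x ∈ D} → (Fin m → ℝ))

/-- `f x ≤ c` is valid and defines a facet of `conv P`. -/
def IsFacet {E : Type*} [AddCommGroup E] [Module ℝ E] (P : Set E) (f : E → ℝ) (c : ℝ) :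
    Prop :=
  (∀ x ∈ P, f x ≤ c) ∧
  Module.finrank ℝ (affineSpan ℝ {x ∈ convexHull ℝ P | f x = c}).direction + 1 =
    Module.finrank ℝ (affineSpan ℝ P).direction

def SS (n m : ℕ) (S : Fin m → Finset (Fin n)) : ℕ → Finset (Fin n) :=
  fun k => if h : 1 ≤ k ∧ k ≤ m then S ⟨k - 1, by omega⟩ else if k = 0 then ∅ else Finset.univ

def dd (m : ℕ) (δ : Fin m → ℝ) : ℕ → ℝ :=
  fun k => if h : 1 ≤ k ∧ k ≤ m then δ ⟨k - 1, by omega⟩ else if k = 0 then 1 else 0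

def mixLeLHS (n m u : ℕ) (S : Fin m → Finset (Fin n)) (p : ℕ) (S' : Finset (Fin n))
    (zd : (Fin n → ℝ) × (Fin m → ℝ)) : ℝ :=
  ∑ j ∈ S', zd.1 j + ((u : ℝ) - ((S' \ SS n m S p).card : ℝ)) * dd m zd.2 p
    + ∑ i ∈ Finset.Icc (p + 1) m,
        (((S' \ SS n m S (i - 1)).card : ℝ) - ((S' \ SS n m S i).card : ℝ)) * dd m zd.2 i

def MixLe (n m u : ℕ) (S : Fin m → Finset (Fin n)) (p : ℕ) (S' : Finset (Fin n))
    (zd : (Fin n → ℝ) × (Fin m → ℝ)) : Prop :=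
  mixLeLHS n m u S p S' zd ≤ (u : ℝ)

def mixGeLHS (n m l : ℕ) (S : Fin m → Finset (Fin n)) (p : ℕ) (S' : Finset (Fin n))
    (zd : (Fin n → ℝ) × (Fin m → ℝ)) : ℝ :=
  (((S' ∪ SS n m S p).card : ℝ) - (n : ℝ) + (l : ℝ)) * dd m zd.2 p
    + ∑ i ∈ Finset.Icc (p + 1) m,
        (((S' ∪ SS n m S i).card : ℝ) - ((S' ∪ SS n m S (i - 1)).card : ℝ)) * dd m zd.2 i
    - ∑ j ∈ S', zd.1 j

def MixGe (n m l : ℕ) (S : Fin m → Finset (Fin n)) (p : ℕ) (S' : Finset (Fin n))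
    (zd : (Fin n → ℝ) × (Fin m → ℝ)) : Prop :=
  mixGeLHS n m l S p S' zd ≤ 0

def NestedLin (n m l u : ℕ) (S : Fin m → Finset (Fin n))
    (zd : (Fin n → ℝ) × (Fin m → ℝ)) : Prop :=
  ((l : ℝ) ≤ ∑ j, zd.1 j) ∧ (∑ j, zd.1 j ≤ (u : ℝ)) ∧
  (∀ i : Fin m, ∀ j ∈ S i, zd.1 j + zd.2 i ≤ 1) ∧
  (1 ≤ dd m zd.2 1 + ∑ j ∈ SS n m S 1, zd.1 j) ∧
  (0 ≤ dd m zd.2 m) ∧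
  (∀ j, 0 ≤ zd.1 j) ∧
  (∀ j, j ∉ SS n m S m → zd.1 j ≤ 1) ∧
  (∀ i : ℕ, 1 ≤ i → i + 1 ≤ m → dd m zd.2 (i + 1) ≤ dd m zd.2 i) ∧
  (∀ i : ℕ, 1 ≤ i → i + 1 ≤ m →
    dd m zd.2 i - dd m zd.2 (i + 1) ≤ ∑ j ∈ SS n m S (i + 1) \ SS n m S i, zd.1 j)

def FollowsPattern (n : ℕ) (α α' : Fin n → ℝ) : Prop :=
  (∀ j, (0 ≤ α j → 0 ≤ α' j) ∧ (α j ≤ 0 → α' j ≤ 0)) ∧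
  (∀ j₁ j₂ : Fin n, α j₂ ≤ α j₁ → α' j₂ ≤ α' j₁)

def IsFacetSet {E : Type*} [AddCommGroup E] [Module ℝ E] (P : Set E) (F : Set E) : Prop :=
  ∃ (f : E →ₗ[ℝ] ℝ) (c : ℝ), (∀ x ∈ P, f x ≤ c) ∧
    F = {x ∈ convexHull ℝ P | f x = c} ∧
    Module.finrank ℝ (affineSpan ℝ F).direction + 1 =
      Module.finrank ℝ (affineSpan ℝ P).direction

/-!
Two linear forms that vanish on a facet are proportional on the direction of the polytope. Since a
face of `conv P` is the hull of the points of `P` on it, vanishing has to be checked on `P` only.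
If `γ ≠ 0`, every coordinate `z_j` with `j ∈ S_1` vanishes at the points of `X` with `β·δ = γ`,
because `z_j = 1` forces `δ = 0`; two such coordinates are independent, a contradiction.
If `γ = 0`, note that the vectors `δ` that occur are the vectors `(1,…,1,0,…,0)`, on which `β` takes
its partial sums as values. A nonzero partial sum, at position `r` say, makes the form that is `1`
at `r` and `0` at all other positions vanish on the face, so it is proportional to `β`: exactly
one partial sum is nonzero, and it is negative by validity.
-/

section LinearAlgebra

variable {K V : Type*} [Field K] [AddCommGroup V] [Module K V]

lemma apply_mul_apply_comm_of_finrank_add_one_eq {W U : Submodule K V} (hWU : W ≤ U)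
    (hfin : Module.finrank K W + 1 = Module.finrank K U) {g h : V →ₗ[K] K}
    (hg : W ≤ LinearMap.ker g) (hh : W ≤ LinearMap.ker h) {v w : V} (hv : v ∈ U) (hw : w ∈ U) :
    g v * h w = g w * h v := by
  have : FiniteDimensional K U := Module.finite_of_finrank_pos (by omega)
  by_cases hgU : U ≤ LinearMap.ker g
  · simp [LinearMap.mem_ker.1 (hgU hv), LinearMap.mem_ker.1 (hgU hw)]
  have hlt : U ⊓ LinearMap.ker g < U := inf_lt_left.2 hgU
  have hW : W = U ⊓ LinearMap.ker g := by
    have : FiniteDimensional K ↥(U ⊓ LinearMap.ker g) := Submodule.finiteDimensional_inf_left _ _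
    refine Submodule.eq_of_le_of_finrank_le (le_inf hWU hg) ?_
    have := Submodule.finrank_lt_finrank_of_lt hlt
    omega
  have hmem : g v • w - g w • v ∈ W := by
    rw [hW]
    refine ⟨U.sub_mem (U.smul_mem _ hw) (U.smul_mem _ hv), ?_⟩
    simp [mul_comm]
  simpa [sub_eq_zero] using hh hmem

end LinearAlgebra

lemma sep_convexHull_eq_convexHull_sep {𝕜 E : Type*} [Field 𝕜] [LinearOrder 𝕜]
    [IsStrictOrderedRing 𝕜] [AddCommGroup E] [Module 𝕜 E] {P : Set E} {f : E →ₗ[𝕜] 𝕜} {c : 𝕜}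
    (hf : ∀ x ∈ P, f x ≤ c) :
    {x ∈ convexHull 𝕜 P | f x = c} = convexHull 𝕜 {x ∈ P | f x = c} := by
  set Q := convexHull 𝕜 {x ∈ P | f x = c}
  apply Set.Subset.antisymm
  · have hconv : Convex 𝕜 {x | f x ≤ c ∧ (f x = c → x ∈ Q)} := by
      rintro x ⟨hxc, hxQ⟩ y ⟨hyc, hyQ⟩ a b ha hb hab
      rcases ha.eq_or_lt with rfl | ha
      · obtain rfl : b = 1 := by simpa using hab
        simpa using ⟨hyc, hyQ⟩
      rcases hb.eq_or_lt with rfl | hb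
      · obtain rfl : a = 1 := by simpa using hab
        simpa using ⟨hxc, hxQ⟩
      have hc : c = a * c + b * c := by rw [← add_mul, hab, one_mul]
      have hax := mul_le_mul_of_nonneg_left hxc ha.le
      have hby := mul_le_mul_of_nonneg_left hyc hb.le
      simp only [Set.mem_ofPred_eq, map_add, map_smul, smul_eq_mul]
      refine ⟨by linarith, fun h => ?_⟩
      have hx : f x = c := mul_left_cancel₀ ha.ne' (by linarith)
      have hy : f y = c := mul_left_cancel₀ hb.ne' (by linarith)
      exact convex_convexHull 𝕜 _ (hxQ hx) (hyQ hy) ha.le hb.le hab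
    rintro x ⟨hx, hxc⟩
    have hP : P ⊆ {x | f x ≤ c ∧ (f x = c → x ∈ Q)} := fun y hy =>
      ⟨hf y hy, fun h => subset_convexHull 𝕜 _ ⟨hy, h⟩⟩
    exact (convexHull_min hP hconv hx).2 hxc
  · exact fun x hx => ⟨convexHull_mono (Set.sep_subset _ _) hx,
      convexHull_min (fun y hy => hy.2) (convex_hyperplane f.isLinear c) hx⟩

namespace IsFacet

variable {E : Type*} [AddCommGroup E] [Module ℝ E] {P : Set E} {f : E →ₗ[ℝ] ℝ} {c : ℝ}

lemma finrank_vectorSpan_add_one (h : IsFacet P f c) :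
    Module.finrank ℝ (vectorSpan ℝ {x ∈ P | f x = c}) + 1 =
      Module.finrank ℝ (vectorSpan ℝ P) := by
  have hdim := h.2
  rwa [sep_convexHull_eq_convexHull_sep h.1, affineSpan_convexHull, direction_affineSpan,
    direction_affineSpan] at hdim

lemma exists_apply_ne (h : IsFacet P f c) : ∃ x ∈ P, f x ≠ c := by
  by_contra! hall
  have hdim := h.finrank_vectorSpan_add_one
  rw [Set.sep_eq_self_iff_mem_true.2 hall] at hdim
  omega

lemma apply_sub_mul_apply_sub_comm (hfacet : IsFacet P f c) {g h : E →ₗ[ℝ] ℝ}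
    (hg : ∀ x ∈ P, f x = c → g x = 0) (hh : ∀ x ∈ P, f x = c → h x = 0)
    {o p q : E} (ho : o ∈ P) (hp : p ∈ P) (hq : q ∈ P) :
    g (p - o) * h (q - o) = g (q - o) * h (p - o) := by
  have vectorSpan_le_ker {k : E →ₗ[ℝ] ℝ} (hk : ∀ x ∈ P, f x = c → k x = 0) :
      vectorSpan ℝ {x ∈ P | f x = c} ≤ LinearMap.ker k := by
    rw [vectorSpan_def, Submodule.span_le]
    rintro _ ⟨x, hx, y, hy, rfl⟩
    simp [hk x hx.1 hx.2, hk y hy.1 hy.2]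
  exact apply_mul_apply_comm_of_finrank_add_one_eq (vectorSpan_mono ℝ (Set.sep_subset _ _))
    hfacet.finrank_vectorSpan_add_one (vectorSpan_le_ker hg) (vectorSpan_le_ker hh)
    (vsub_mem_vectorSpan ℝ hp ho) (vsub_mem_vectorSpan ℝ hq ho)

end IsFacet

section PrefixIndicator

variable {R : Type*} {m : ℕ}

/-- The vector `(1,…,1,0,…,0)` of length `m` with `r` leading ones. -/
def prefixIndicator (R : Type*) [Zero R] [One R] {m : ℕ} (r : Fin (m + 1)) : Fin m → R :=
  fun i => if i.castSucc < r then 1 else 0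

lemma prefixIndicator_zero [Zero R] [One R] : prefixIndicator R (0 : Fin (m + 1)) = 0 := by
  ext i
  simp [prefixIndicator]

lemma prefixIndicator_succ [AddZeroClass R] [One R] (i : Fin m) :
    prefixIndicator R i.succ = prefixIndicator R i.castSucc + Pi.single i 1 := by
  ext k
  rcases lt_trichotomy k i with h | rfl | h
  · simp [prefixIndicator, h, h.le, h.ne]
  · simp [prefixIndicator]
  · simp [prefixIndicator, h.not_ge, h.not_gt, h.ne']

lemma dotProduct_prefixIndicator [NonAssocSemiring R] (β : Fin m → R) (r : Fin (m + 1)) :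
    β ⬝ᵥ prefixIndicator R r = Fin.partialSum β r := by
  induction r using Fin.induction with
  | zero => simp [prefixIndicator_zero]
  | succ i ih => rw [prefixIndicator_succ, dotProduct_add, ih, Fin.partialSum_succ]; simp

lemma exists_partialSum_eq [AddGroup R] {v : Fin (m + 1) → R} (hv : v 0 = 0) :
    ∃ η : Fin m → R, Fin.partialSum η = v := by
  refine ⟨fun i => -v i.castSucc + v i.succ, ?_⟩
  simpa [hv] using Fin.partialSum_left_neg v

lemma exists_eq_prefixIndicator_of_antitone [Zero R] [One R] {p : Fin m → Prop} [DecidablePred p]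
    (hp : Antitone p) :
    ∃ r : Fin (m + 1), (fun i => if p i then 1 else 0) = prefixIndicator R r := by
  by_cases hall : ∀ i, p i
  · exact ⟨Fin.last m, by ext i; simp [prefixIndicator, hall, Fin.castSucc_lt_last]⟩
  push Not at hall
  obtain ⟨i₀, hi₀, hmin⟩ := exists_minimal_of_wellFoundedLT (fun i => ¬ p i) hall
  have hp_iff (i : Fin m) : p i ↔ i < i₀ := by
    refine ⟨fun hi => not_le.1 fun h => hi₀ (hp h hi), fun hi => ?_⟩
    by_contra hpi
    exact hi.not_ge (hmin hpi hi.le)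
  exact ⟨i₀.castSucc, by ext i; simp [prefixIndicator, hp_iff]⟩

lemma eq_of_partialSum_eq_single [AddGroup R] {β : Fin m → R} {i : Fin m} {a : R}
    (h : Fin.partialSum β = Pi.single i.succ a) (k : Fin m) :
    β k = if k = i then a else if (k : ℕ) = i + 1 then -a else 0 := by
  rw [← Fin.partialSum_right_neg β k, h]
  simp only [Pi.single_apply, Fin.ext_iff, Fin.val_castSucc, Fin.val_succ]
  split_ifs <;> first | omega | simp

end PrefixIndicator

/-- The linear form `(z, δ) ↦ β·δ`, the left-hand side of an inequality without `z`-terms. -/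
abbrev sndForm {E : Type*} [AddCommGroup E] [Module ℝ E] {m : ℕ} (β : Fin m → ℝ) :
    E × (Fin m → ℝ) →ₗ[ℝ] ℝ :=
  dotProductBilin ℝ ℝ β ∘ₗ LinearMap.snd ℝ E (Fin m → ℝ)

lemma sndForm_apply_of_snd_eq_prefixIndicator {E : Type*} [AddCommGroup E] [Module ℝ E] {m : ℕ}
    (β : Fin m → ℝ) {x : E × (Fin m → ℝ)} {r : Fin (m + 1)} (hx : x.2 = prefixIndicator ℝ r) :
    sndForm β x = Fin.partialSum β r := by
  simp [hx, dotProduct_prefixIndicator]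

section FacetOfPrefixIndicators

variable {E : Type*} [AddCommGroup E] [Module ℝ E] {m : ℕ} {X : Set (E × (Fin m → ℝ))}
  {β : Fin m → ℝ}

lemma partialSum_eq_zero_of_isFacet (hX : Prod.snd '' X = Set.range (prefixIndicator ℝ))
    (hfacet : IsFacet X (sndForm β) 0) {r s : Fin (m + 1)} (hr : Fin.partialSum β r ≠ 0)
    (hsr : s ≠ r) : Fin.partialSum β s = 0 := by
  have exists_point (t : Fin (m + 1)) :
      ∃ x ∈ X, ∀ η, sndForm η x = Fin.partialSum η t := by
    obtain ⟨x, hxX, hx⟩ := hX.superset ⟨t, rfl⟩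
    exact ⟨x, hxX, fun η => sndForm_apply_of_snd_eq_prefixIndicator η hx⟩
  have hr0 : 0 ≠ r := by
    rintro rfl
    simp at hr
  obtain ⟨η, hη⟩ := exists_partialSum_eq (v := Pi.single (M := fun _ => ℝ) r 1)
    (Pi.single_eq_of_ne hr0 1)
  have hη_face : ∀ y ∈ X, sndForm β y = 0 → sndForm η y = 0 := by
    intro y hy hy0
    obtain ⟨t, ht⟩ := hX.subset ⟨y, hy, rfl⟩
    rw [sndForm_apply_of_snd_eq_prefixIndicator _ ht.symm] at hy0 ⊢
    rw [hη, Pi.single_eq_of_ne]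
    rintro rfl
    exact hr hy0
  obtain ⟨o, hoX, ho⟩ := exists_point 0
  obtain ⟨x, hxX, hx⟩ := exists_point r
  obtain ⟨y, hyX, hy⟩ := exists_point s
  simpa only [map_sub, ho, hx, hy, hη, Fin.partialSum_zero, Pi.single_eq_same,
    Pi.single_eq_of_ne hsr, Pi.single_eq_of_ne hr0, sub_zero, one_mul, zero_mul]
    using hfacet.apply_sub_mul_apply_sub_comm hη_face (fun _ _ => id) hoX hxX hyX

lemma exists_partialSum_eq_single_of_isFacet
    (hX : Prod.snd '' X = Set.range (prefixIndicator ℝ)) (hfacet : IsFacet X (sndForm β) 0) :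
    ∃ i : Fin m, ∃ c : ℝ, 0 < c ∧ Fin.partialSum β = Pi.single i.succ (-c) := by
  obtain ⟨x, hxX, hx⟩ := hfacet.exists_apply_ne
  have hx_neg : sndForm β x < 0 := (hfacet.1 x hxX).lt_of_ne hx
  obtain ⟨r, hr⟩ := hX.subset ⟨x, hxX, rfl⟩
  rw [sndForm_apply_of_snd_eq_prefixIndicator β hr.symm] at hx hx_neg
  obtain ⟨i, rfl⟩ := Fin.exists_succ_eq.2 (show r ≠ 0 by rintro rfl; simp at hx)
  refine ⟨i, -Fin.partialSum β i.succ, neg_pos.2 hx_neg, ?_⟩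
  ext s
  rcases eq_or_ne s i.succ with rfl | hs
  · simp
  · simp [partialSum_eq_zero_of_isFacet hX hfacet hx hs, hs]

end FacetOfPrefixIndicators

lemma exists_mem_forall_lt_notMem_of_strictMono {ι α : Type*} [PartialOrder ι]
    [PredOrder ι] {S : ι → Finset α} (hS : StrictMono S) (hne : ∀ i, (S i).Nonempty) (i : ι) :
    ∃ j ∈ S i, ∀ k < i, j ∉ S k := by
  by_cases hi : IsMin i
  · obtain ⟨j, hj⟩ := hne i
    exact ⟨j, hj, fun k hk => (hi.not_lt hk).elim⟩
  · obtain ⟨j, hj, hj_pred⟩ := Finset.exists_of_ssubset (hS (Order.pred_lt_of_not_isMin hi))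
    exact ⟨j, hj, fun k hk hjk => hj_pred (hS.monotone (Order.le_pred_of_lt hk) hjk)⟩

section Xset

variable {n m l u : ℕ} {S : Fin m → Finset (Fin n)}

lemma snd_apply_eq_zero_of_mem_Xset {x : (Fin n → ℝ) × (Fin m → ℝ)} (hx : x ∈ Xset n m l u S)
    {i : Fin m} {j : Fin n} (hj : j ∈ S i) (hxj : x.1 j = 1) : x.2 i = 0 := by
  rw [hx.2.2.1 i]
  exact Finset.prod_eq_zero hj (by simp [hxj])

lemma snd_apply_eq_ite_of_mem_Xset {x : (Fin n → ℝ) × (Fin m → ℝ)} (hx : x ∈ Xset n m l u S)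
    (i : Fin m) : x.2 i = if ∀ j ∈ S i, x.1 j = 0 then 1 else 0 := by
  split_ifs with h
  · rw [hx.2.2.1 i]
    exact Finset.prod_eq_one fun j hj => by simp [h j hj]
  · push Not at h
    obtain ⟨j, hj, hxj⟩ := h
    exact snd_apply_eq_zero_of_mem_Xset hx hj ((hx.1 j).resolve_left hxj)

lemma indicator_mem_Xset {A : Finset (Fin n)} (hl : l ≤ #A) (hu : #A ≤ u) :
    ((fun j => if j ∈ A then 1 else 0, fun i => if Disjoint (S i) A then 1 else 0) :
      (Fin n → ℝ) × (Fin m → ℝ)) ∈ Xset n m l u S := by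
  refine ⟨fun j => (ite_eq_or_eq _ _ _).symm, fun i => (ite_eq_or_eq _ _ _).symm, fun i => ?_, ?_,
    ?_⟩
  · dsimp only
    split_ifs with h
    · exact (Finset.prod_eq_one fun j hj => by simp [Finset.disjoint_left.1 h hj]).symm
    · obtain ⟨j, hj, hjA⟩ := Finset.not_disjoint_iff.1 h
      exact (Finset.prod_eq_zero hj (by simp [hjA])).symm
  · simpa using hl
  · simpa using hu

-- Elements of `R` lie in no `S i`, so they can be used to raise the cardinality to `l` freely.
lemma exists_mem_Xset_of_disjoint {B R : Finset (Fin n)} (hBR : Disjoint B R)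
    (hSR : ∀ i, Disjoint (S i) R) (hlu : l ≤ u) (hl : l ≤ #B + #R) (hu : #B ≤ u) :
    ∃ x ∈ Xset n m l u S, (∀ j ∉ R, x.1 j = if j ∈ B then 1 else 0) ∧
      ∀ i, x.2 i = if Disjoint (S i) B then 1 else 0 := by
  obtain ⟨T, hTR, hT⟩ := Finset.exists_subset_card_eq (s := R) (n := l - #B) (by omega)
  have hcard : #(B ∪ T) = #B + (l - #B) := by
    rw [Finset.card_union_of_disjoint (hBR.mono_right hTR), hT]
  refine ⟨_, indicator_mem_Xset (A := B ∪ T) (by omega) (by omega), fun j hj => ?_, fun i => ?_⟩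
  · simp [show j ∉ T from fun h => hj (hTR h)]
  · simp [(hSR i).mono_right hTR]

lemma Dset_eq_range_prefixIndicator (hS : StrictMono S) (hne : ∀ i, (S i).Nonempty)
    {R : Finset (Fin n)} (hSR : ∀ i, Disjoint (S i) R) (hlu : l ≤ u) (hl : l ≤ #R) (hu : 0 < u) :
    Dset n m l u S = Set.range (prefixIndicator ℝ) := by
  apply Set.Subset.antisymm
  · rintro _ ⟨x, hx, rfl⟩
    have hanti : Antitone fun i => ∀ j ∈ S i, x.1 j = 0 :=
      fun i k hik h j hj => h j (hS.monotone hik hj)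
    obtain ⟨r, hr⟩ := exists_eq_prefixIndicator_of_antitone (R := ℝ) hanti
    exact ⟨r, by rw [← hr, ← funext (snd_apply_eq_ite_of_mem_Xset hx)]⟩
  · rintro _ ⟨r, rfl⟩
    suffices ∃ B : Finset (Fin n), Disjoint B R ∧ #B ≤ u ∧
        ∀ i, Disjoint (S i) B ↔ i.castSucc < r by
      obtain ⟨B, hBR, hBu, hB⟩ := this
      obtain ⟨x, hx, -, hx_snd⟩ := exists_mem_Xset_of_disjoint hBR hSR hlu (by omega) hBu
      exact ⟨x, hx, by ext i; simp only [hx_snd, hB, prefixIndicator]⟩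
    cases r using Fin.lastCases with
    | last => exact ⟨∅, by simp [Fin.castSucc_lt_last]⟩
    | cast i =>
      obtain ⟨j, hj, hj_lt⟩ := exists_mem_forall_lt_notMem_of_strictMono hS hne i
      refine ⟨{j}, by simpa using Finset.disjoint_left.1 (hSR i) hj,
        by simpa using Nat.succ_le_of_lt hu, fun k => ?_⟩
      rw [Finset.disjoint_singleton_right, Fin.castSucc_lt_castSucc_iff]
      exact ⟨fun h => not_le.1 fun hik => h (hS.monotone hik hj), hj_lt k⟩

lemma eq_zero_of_isFacet_Xset_sndForm {R : Finset (Fin n)} (hSR : ∀ i, Disjoint (S i) R)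
    (hlu : l ≤ u) (hl : l ≤ #R) (hu : 0 < u) {j₁ j₂ : Fin n} (hne : j₁ ≠ j₂)
    (hR₁ : j₁ ∉ R) (hR₂ : j₂ ∉ R) (hS₁ : ∀ i, j₁ ∈ S i) (hS₂ : ∀ i, j₂ ∈ S i)
    {β : Fin m → ℝ} {γ : ℝ} (hfacet : IsFacet (Xset n m l u S) (sndForm β) γ) : γ = 0 := by
  by_contra hγ
  let coord (j : Fin n) : (Fin n → ℝ) × (Fin m → ℝ) →ₗ[ℝ] ℝ :=
    LinearMap.proj j ∘ₗ LinearMap.fst ℝ _ _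
  have coord_face {j : Fin n} (hj : ∀ i, j ∈ S i) :
      ∀ x ∈ Xset n m l u S, sndForm β x = γ → coord j x = 0 := by
    intro x hx hxγ
    refine (hx.1 j).resolve_right fun hxj => hγ ?_
    have hx_snd : x.2 = 0 := funext fun i => snd_apply_eq_zero_of_mem_Xset hx (hj i) hxj
    simp [← hxγ, hx_snd]
  have exists_point (B : Finset (Fin n)) (hB : Disjoint B R) (hBu : #B ≤ u) :
      ∃ x ∈ Xset n m l u S, ∀ j ∉ R, coord j x = if j ∈ B then 1 else 0 := by
    obtain ⟨x, hx, hx_fst, -⟩ := exists_mem_Xset_of_disjoint hB hSR hlu (by omega) hBu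
    exact ⟨x, hx, hx_fst⟩
  obtain ⟨o, hoX, ho⟩ := exists_point ∅ (by simp) (by simp)
  obtain ⟨p, hpX, hp⟩ := exists_point {j₁} (by simpa) (by simpa)
  obtain ⟨q, hqX, hq⟩ := exists_point {j₂} (by simpa) (by simpa)
  simpa [ho, hp, hq, hR₁, hR₂, hne, hne.symm] using
    hfacet.apply_sub_mul_apply_sub_comm (coord_face hS₁) (coord_face hS₂) hoX hpX hqX

lemma SS_val_add_one (i : Fin m) : SS n m S (i + 1) = S i := by
  simp [SS, Nat.succ_le_of_lt i.2]

lemma SS_one_subset (hS : Monotone S) (i : Fin m) : SS n m S 1 ⊆ S i := by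
  have hm : 0 < m := i.pos
  have h : SS n m S 1 = S ⟨0, hm⟩ := SS_val_add_one ⟨0, hm⟩
  exact h.trans_subset (hS (Fin.mk_le_of_le_val (Nat.zero_le _)))

lemma subset_SS_self (hS : Monotone S) (i : Fin m) : S i ⊆ SS n m S m := by
  have hm : 0 < m := i.pos
  have h : SS n m S (m - 1 + 1) = S ⟨m - 1, Nat.sub_lt hm one_pos⟩ := SS_val_add_one ⟨m - 1, _⟩
  rw [Nat.sub_add_cancel hm] at h
  exact (hS (Nat.le_sub_one_of_lt i.2)).trans h.symm.subset

end Xset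

theorem stmt8_general (n m l u : ℕ) (S : Fin m → Finset (Fin n))
    (hm : 0 < m) (hu : 0 < u) (hlu : l ≤ u)
    (hnested : ∀ i j : Fin m, i < j → S i ⊂ S j)
    (hS1 : 2 ≤ (SS n m S 1).card)
    (hSm : l ≤ n - (SS n m S m).card)
    (β : Fin m → ℝ) (γ : ℝ)
    (hfacet : IsFacet (Xset n m l u S) (fun zd => ∑ i, β i * zd.2 i) γ) :
    ∃ c : ℝ, 0 < c ∧ γ = 0 ∧
      ((∃ i : Fin m, ∃ h : (i : ℕ) + 1 < m,
          β = fun k => if k = (⟨(i : ℕ) + 1, h⟩ : Fin m) then c else if k = i then -c else 0)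
        ∨ β = fun k => if k = (⟨m - 1, Nat.sub_lt hm one_pos⟩ : Fin m) then -c else 0) := by
  have hS : StrictMono S := fun i j => hnested i j
  have hfacet' : IsFacet (Xset n m l u S) (sndForm β) γ := hfacet
  have hSR (i : Fin m) : Disjoint (S i) (SS n m S m)ᶜ :=
    disjoint_compl_right.mono_left (subset_SS_self hS.monotone i)
  have hl : l ≤ #(SS n m S m)ᶜ := by simpa [Finset.card_compl] using hSm
  obtain ⟨j₁, hj₁, j₂, hj₂, hne⟩ := Finset.one_lt_card.1 hS1
  have hmem {j : Fin n} (hj : j ∈ SS n m S 1) (i : Fin m) : j ∈ S i :=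
    SS_one_subset hS.monotone i hj
  have hmemR {j : Fin n} (hj : j ∈ SS n m S 1) : j ∉ (SS n m S m)ᶜ :=
    Finset.disjoint_left.1 (hSR ⟨0, hm⟩) (hmem hj _)
  obtain rfl : γ = 0 := eq_zero_of_isFacet_Xset_sndForm hSR hlu hl hu hne (hmemR hj₁) (hmemR hj₂)
    (hmem hj₁) (hmem hj₂) hfacet'
  have hD := Dset_eq_range_prefixIndicator hS (fun i => ⟨j₁, hmem hj₁ i⟩) hSR hlu hl hu
  obtain ⟨i, c, hc, hβ⟩ := exists_partialSum_eq_single_of_isFacet hD hfacet'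
  have hβ_apply := eq_of_partialSum_eq_single hβ
  refine ⟨c, hc, rfl, ?_⟩
  by_cases h : (i : ℕ) + 1 < m
  · refine Or.inl ⟨i, h, funext fun k => ?_⟩
    simp only [hβ_apply, Fin.ext_iff]
    split_ifs <;> first | omega | simp
  · refine Or.inr (funext fun k => ?_)
    simp only [hβ_apply, Fin.ext_iff]
    split_ifs <;> first | omega | rfl

theorem stmt8 (n m l u : ℕ) (S : Fin m → Finset (Fin n))
    (hn : 0 < n) (hm : 0 < m) (hu : 2 ≤ u) (hlu : l < u)
    (hnested : ∀ i j : Fin m, i < j → S i ⊂ S j)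
    (hS1 : 2 ≤ (SS n m S 1).card)
    (hSm : l ≤ n - (SS n m S m).card)
    (β : Fin m → ℝ) (γ : ℝ)
    (hfacet : IsFacet (Xset n m l u S) (fun zd => ∑ i, β i * zd.2 i) γ) :
    ∃ c : ℝ, 0 < c ∧ γ = 0 ∧
      ((∃ i : Fin m, ∃ h : (i : ℕ) + 1 < m,
          β = fun k => if k = (⟨(i : ℕ) + 1, h⟩ : Fin m) then c else if k = i then -c else 0)
        ∨ β = fun k => if k = (⟨m - 1, Nat.sub_lt hm one_pos⟩ : Fin m) then -c else 0) := by
  exact stmt8_general n m l u S hm (by omega) hlu.le hnested hS1 hSm β γ hfacet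
end
end

section
/- For every p ∈ I and every S' ⊆ J with |S'∖S_p| ≤ u − 1, the mixing inequality Mix≤(S',p) holds for every (z,δ) ∈ X^{0,u}. -/
open Finset

noncomputable section

/-!
Write `w j = 1 - z j ≥ 0` and `E i = S' \ S_i`, a decreasing chain. Since `δ_i ≤ w j` for `j ∈ S_i`,
the term `(|E (i - 1)| - |E i|) δ_i` is at most the weight `w` of the layer `E (i - 1) \ E i`. These
bounds telescope, so the last sum of the inequality is at most `w(E p) = |E p| - z(E p)`. If
`δ_p = 1`, then `z` vanishes on `S_p`, so `z(E p) = z(S')` and the inequality follows. If `δ_p = 0`,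
then `δ_i = 0` for all `i ≥ p` and only `z(S') ≤ z(J) ≤ u` is left.
-/

section LayerSums

variable {ι R : Type*} [DecidableEq ι] [Ring R] [PartialOrder R] [IsOrderedAddMonoid R]
  {w : ι → R}

lemma card_sub_card_mul_le_sum_sub_sum {A B : Finset ι} {c : R} (hBA : B ⊆ A)
    (hc : ∀ j ∈ A \ B, c ≤ w j) :
    ((#A : R) - #B) * c ≤ ∑ j ∈ A, w j - ∑ j ∈ B, w j := by
  rw [← cast_card_sdiff hBA, ← sum_sdiff_eq_sub hBA, ← nsmul_eq_mul]
  exact card_nsmul_le_sum _ _ _ hc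

lemma sum_card_sub_card_mul_le_of_antitone {E : ℕ → Finset ι} (hE : Antitone E) {d : ℕ → R}
    {p q : ℕ} (hpq : p ≤ q) (hd : ∀ i ∈ Icc (p + 1) q, ∀ j ∈ E (i - 1) \ E i, d i ≤ w j) :
    ∑ i ∈ Icc (p + 1) q, ((#(E (i - 1)) : R) - #(E i)) * d i ≤
      ∑ j ∈ E p, w j - ∑ j ∈ E q, w j := by
  have telescope : ∑ i ∈ Icc (p + 1) q, (∑ j ∈ E (i - 1), w j - ∑ j ∈ E i, w j) =
      ∑ j ∈ E p, w j - ∑ j ∈ E q, w j := by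
    rw [← Ico_add_one_right_eq_Icc, ← sum_Ico_add']
    simpa only [Nat.add_sub_cancel, neg_sub_neg] using
      sum_Ico_sub (f := fun i ↦ -∑ j ∈ E i, w j) hpq
  rw [← telescope]
  gcongr with i hi
  exact card_sub_card_mul_le_sum_sub_sum (hE (Nat.sub_le i 1)) (hd i hi)

end LayerSums

section Multilinear

variable {n m l u : ℕ} {S : Fin m → Finset (Fin n)} {zd : (Fin n → ℝ) × (Fin m → ℝ)}

lemma monotone_SS (hS : Monotone S) : Monotone (SS n m S) := by
  intro i k hik
  unfold SS
  split_ifs <;> first | omega | simp | exact hS (Fin.mk_le_mk.2 (by omega))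

lemma nonneg_of_mem_Xset (hzd : zd ∈ Xset n m l u S) (j : Fin n) : 0 ≤ zd.1 j := by
  rcases hzd.1 j with hj | hj <;> simp [hj]

lemma le_one_of_mem_Xset (hzd : zd ∈ Xset n m l u S) (j : Fin n) : zd.1 j ≤ 1 := by
  rcases hzd.1 j with hj | hj <;> simp [hj]

lemma sum_le_of_mem_Xset (hzd : zd ∈ Xset n m l u S) (A : Finset (Fin n)) :
    ∑ j ∈ A, zd.1 j ≤ u :=
  (sum_le_univ_sum_of_nonneg (nonneg_of_mem_Xset hzd)).trans hzd.2.2.2.2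

lemma dd_eq_zero_or_one (hzd : zd ∈ Xset n m l u S) (k : ℕ) :
    dd m zd.2 k = 0 ∨ dd m zd.2 k = 1 := by
  unfold dd
  split_ifs with hk
  exacts [hzd.2.1 _, .inr rfl, .inl rfl]

lemma dd_eq_prod (hzd : zd ∈ Xset n m l u S) {k : ℕ} (hk : k ≤ m) :
    dd m zd.2 k = ∏ j ∈ SS n m S k, (1 - zd.1 j) := by
  rcases k.eq_zero_or_pos with rfl | hk0
  · simp [dd, SS]
  · have hk' : 1 ≤ k ∧ k ≤ m := ⟨hk0, hk⟩
    simpa only [dd, SS, dif_pos hk'] using hzd.2.2.1 ⟨k - 1, by omega⟩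

lemma antitone_prod_one_sub (hzd : zd ∈ Xset n m l u S) :
    Antitone fun A : Finset (Fin n) ↦ ∏ j ∈ A, (1 - zd.1 j) :=
  prod_anti_set_of_le_one (fun j ↦ sub_nonneg.2 (le_one_of_mem_Xset hzd j))
    fun j ↦ sub_le_self 1 (nonneg_of_mem_Xset hzd j)

lemma dd_le_one_sub (hzd : zd ∈ Xset n m l u S) {k : ℕ} (hk : k ≤ m) {j : Fin n}
    (hj : j ∈ SS n m S k) : dd m zd.2 k ≤ 1 - zd.1 j := by
  rw [dd_eq_prod hzd hk]
  simpa only [prod_singleton] using antitone_prod_one_sub hzd (singleton_subset_iff.2 hj)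

lemma antitoneOn_dd (hS : Monotone S) (hzd : zd ∈ Xset n m l u S) :
    AntitoneOn (dd m zd.2) (Set.Iic m) := by
  intro i hi k hk hik
  rw [dd_eq_prod hzd hi, dd_eq_prod hzd hk]
  exact antitone_prod_one_sub hzd (monotone_SS hS hik)

lemma dd_eq_zero_of_le (hS : Monotone S) (hzd : zd ∈ Xset n m l u S) {i k : ℕ} (hik : i ≤ k)
    (hk : k ≤ m) (hi : dd m zd.2 i = 0) : dd m zd.2 k = 0 := by
  have dd_le := antitoneOn_dd hS hzd (hik.trans hk) hk hik
  rcases dd_eq_zero_or_one hzd k with h | h <;> linarith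

lemma sum_sdiff_SS_eq_sum (hzd : zd ∈ Xset n m l u S) {k : ℕ} (hk : k ≤ m)
    (hd : dd m zd.2 k = 1) (A : Finset (Fin n)) :
    ∑ j ∈ A \ SS n m S k, zd.1 j = ∑ j ∈ A, zd.1 j := by
  refine sum_subset sdiff_subset fun j hjA hj ↦ ?_
  have hjk : j ∈ SS n m S k := by simpa [hjA] using hj
  linarith [dd_le_one_sub hzd hk hjk, nonneg_of_mem_Xset hzd j]

lemma sum_card_sdiff_SS_mul_dd_le (hS : Monotone S) (hzd : zd ∈ Xset n m l u S) {p : ℕ}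
    (hp : p ≤ m) (A : Finset (Fin n)) :
    ∑ i ∈ Icc (p + 1) m, ((#(A \ SS n m S (i - 1)) : ℝ) - #(A \ SS n m S i)) * dd m zd.2 i ≤
      #(A \ SS n m S p) - ∑ j ∈ A \ SS n m S p, zd.1 j := by
  have hE : Antitone fun i ↦ A \ SS n m S i :=
    fun i k hik ↦ sdiff_subset_sdiff subset_rfl (monotone_SS hS hik)
  have layer_le : ∀ i ∈ Icc (p + 1) m, ∀ j ∈ (A \ SS n m S (i - 1)) \ (A \ SS n m S i),
      dd m zd.2 i ≤ 1 - zd.1 j := by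
    intro i hi j hj
    refine dd_le_one_sub hzd (mem_Icc.1 hi).2 ?_
    grind
  calc
    _ ≤ ∑ j ∈ A \ SS n m S p, (1 - zd.1 j) - ∑ j ∈ A \ SS n m S m, (1 - zd.1 j) :=
      sum_card_sub_card_mul_le_of_antitone hE hp layer_le
    _ ≤ ∑ j ∈ A \ SS n m S p, (1 - zd.1 j) :=
      sub_le_self _ (sum_nonneg fun j _ ↦ sub_nonneg.2 (le_one_of_mem_Xset hzd j))
    _ = #(A \ SS n m S p) - ∑ j ∈ A \ SS n m S p, zd.1 j := by simp

lemma mixLe_of_dd_eq_zero (hS : Monotone S) (hzd : zd ∈ Xset n m l u S) {p : ℕ}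
    (hd : dd m zd.2 p = 0) (S' : Finset (Fin n)) : MixLe n m u S p S' zd := by
  have tail_eq_zero : ∑ i ∈ Icc (p + 1) m,
      ((#(S' \ SS n m S (i - 1)) : ℝ) - #(S' \ SS n m S i)) * dd m zd.2 i = 0 := by
    refine sum_eq_zero fun i hi ↦ ?_
    obtain ⟨hpi, him⟩ := mem_Icc.1 hi
    rw [dd_eq_zero_of_le hS hzd (Nat.le_of_succ_le hpi) him hd, mul_zero]
  unfold MixLe mixLeLHS
  rw [tail_eq_zero, hd, mul_zero, add_zero, add_zero]
  exact sum_le_of_mem_Xset hzd S'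

lemma mixLe_of_dd_eq_one (hS : Monotone S) (hzd : zd ∈ Xset n m l u S) {p : ℕ} (hp : p ≤ m)
    (hd : dd m zd.2 p = 1) (S' : Finset (Fin n)) : MixLe n m u S p S' zd := by
  have tail_le := sum_card_sdiff_SS_mul_dd_le hS hzd hp S'
  rw [sum_sdiff_SS_eq_sum hzd hp hd] at tail_le
  unfold MixLe mixLeLHS
  rw [hd, mul_one]
  linarith

end Multilinear

theorem stmt10_general {n m l u : ℕ} {S : Fin m → Finset (Fin n)} (hS : Monotone S) {p : ℕ}
    (hp : p ≤ m) (S' : Finset (Fin n)) : ∀ zd ∈ Xset n m l u S, MixLe n m u S p S' zd := by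
  intro zd hzd
  rcases dd_eq_zero_or_one hzd p with hd | hd
  · exact mixLe_of_dd_eq_zero hS hzd hd S'
  · exact mixLe_of_dd_eq_one hS hzd hp hd S'

theorem stmt10 (n m l u : ℕ) (S : Fin m → Finset (Fin n))
    (hn : 0 < n) (hm : 0 < m) (hu : 2 ≤ u) (hlu : l < u)
    (hnested : ∀ i j : Fin m, i < j → S i ⊂ S j)
    (hS1 : 2 ≤ (SS n m S 1).card)
    (hSm : l ≤ n - (SS n m S m).card)
    (p : ℕ) (hp1 : 1 ≤ p) (hpm : p ≤ m)
    (S' : Finset (Fin n)) (hS' : (S' \ SS n m S p).card ≤ u - 1) :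
    ∀ zd ∈ Xset n m 0 u S, MixLe n m u S p S' zd := by
  have hS : StrictMono S := fun i j hij ↦ hnested i j hij
  exact stmt10_general hS.monotone hpm S'
end
end
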